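/- arXiv:1502.03602 — 4 statements merged into one kernel-verified Lean document; each statement's English description precedes it below -/
import Mathlib

section
/- Let P ∈ ℝ^{n×n} be symmetric positive definite with smallest and largest eigenvalues λ_min(P), λ_max(P), let Γ ∈ ℝ^{n×n} be such that PΓ is symmetric positive semidefinite with smallest eigenvalue λ_min(PΓ), let α ≥ 0, and let f : ℝⁿ → ℝⁿ be Lipschitz with constant L_f, i.e., ‖f(u) − f(v)‖ ≤ L_f‖u − v‖ for all u, v ∈ ℝⁿ (Euclidean norm). Then f ∈ Quad(P, αΓ, β) with β = α·λ_min(PΓ)/λ_max(P) − L_f·λ_max(P)/λ_min(P); that is, for all u, v ∈ ℝⁿ, (u − v)ᵀ P [f(u) − f(v) − αΓ(u − v)] ≤ −β·(u − v)ᵀ P (u − v). -/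
open Matrix

/-- The Euclidean norm on `ℝⁿ`. -/
noncomputable def euclNorm {n : ℕ} (x : Fin n → ℝ) : ℝ := Real.sqrt (∑ i, x i ^ 2)

/-- `f ∈ Quad(P, αΓ, β)`:
`(u − v)ᵀ P [f(u) − f(v) − αΓ(u − v)] ≤ −β·(u − v)ᵀ P (u − v)` for all `u, v`. -/
def MemQuad {n : ℕ} (P Γ : Matrix (Fin n) (Fin n) ℝ) (α β : ℝ)
    (f : (Fin n → ℝ) → (Fin n → ℝ)) : Prop :=
  ∀ u v : Fin n → ℝ,
    (u - v) ⬝ᵥ P *ᵥ (f u - f v - α • Γ *ᵥ (u - v)) ≤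
      -β * ((u - v) ⬝ᵥ P *ᵥ (u - v))

lemma quad_spectral {n : ℕ} (A : Matrix (Fin n) (Fin n) ℝ) (hA : A.IsHermitian)
    (x : Fin n → ℝ) : ∃ y : Fin n → ℝ, x ⬝ᵥ x = ∑ i, y i ^ 2 ∧
      x ⬝ᵥ A *ᵥ x = ∑ i, hA.eigenvalues i * y i ^ 2 := by
  set U : Matrix (Fin n) (Fin n) ℝ := (hA.eigenvectorUnitary : Matrix (Fin n) (Fin n) ℝ) with hU
  have hUU : U * Uᵀ = 1 := by
    have := (Matrix.mem_unitaryGroup_iff).1 hA.eigenvectorUnitary.2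
    simpa [Matrix.star_eq_conjTranspose] using this
  have hs : A = U * Matrix.diagonal hA.eigenvalues * Uᵀ := by
    have := hA.spectral_theorem
    rw [Unitary.conjStarAlgAut_apply] at this
    simpa [Matrix.star_eq_conjTranspose, Function.comp_def] using this
  have key : ∀ D : Matrix (Fin n) (Fin n) ℝ,
      x ⬝ᵥ (U * D * Uᵀ) *ᵥ x = (Uᵀ *ᵥ x) ⬝ᵥ D *ᵥ (Uᵀ *ᵥ x) := by
    intro D
    rw [← Matrix.mulVec_mulVec, ← Matrix.mulVec_mulVec, Matrix.dotProduct_mulVec,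
      ← Matrix.mulVec_transpose]
  refine ⟨Uᵀ *ᵥ x, ?_, ?_⟩
  · have := key 1
    rw [Matrix.mul_one, hUU, Matrix.one_mulVec, Matrix.one_mulVec] at this
    rw [this]
    simp [dotProduct, sq]
  · have := key (Matrix.diagonal hA.eigenvalues)
    rw [← hs] at this
    rw [this]
    simp only [dotProduct, Matrix.mulVec_diagonal]
    exact Finset.sum_congr rfl fun i _ => by ring

lemma quad_lower {n : ℕ} (A : Matrix (Fin n) (Fin n) ℝ) (hA : A.IsHermitian)
    (x : Fin n → ℝ) : (⨅ i, hA.eigenvalues i) * (x ⬝ᵥ x) ≤ x ⬝ᵥ A *ᵥ x := by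
  obtain ⟨y, h1, h2⟩ := quad_spectral A hA x
  rw [h1, h2, Finset.mul_sum]
  exact Finset.sum_le_sum fun i _ =>
    mul_le_mul_of_nonneg_right (ciInf_le (Set.finite_range _).bddBelow i) (sq_nonneg _)

lemma quad_upper {n : ℕ} (A : Matrix (Fin n) (Fin n) ℝ) (hA : A.IsHermitian)
    (x : Fin n → ℝ) : x ⬝ᵥ A *ᵥ x ≤ (⨆ i, hA.eigenvalues i) * (x ⬝ᵥ x) := by
  obtain ⟨y, h1, h2⟩ := quad_spectral A hA x
  rw [h1, h2, Finset.mul_sum]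
  exact Finset.sum_le_sum fun i _ =>
    mul_le_mul_of_nonneg_right (le_ciSup (Set.finite_range _).bddAbove i) (sq_nonneg _)

lemma euclNorm_sq' {n : ℕ} (x : Fin n → ℝ) : euclNorm x ^ 2 = x ⬝ᵥ x := by
  unfold euclNorm
  rw [Real.sq_sqrt (Finset.sum_nonneg fun i _ => sq_nonneg _)]
  simp [dotProduct, sq]

lemma quad_cross {n : ℕ} (P : Matrix (Fin n) (Fin n) ℝ) (hP : P.PosDef)
    (x y : Fin n → ℝ) :
    x ⬝ᵥ P *ᵥ y ≤ (⨆ i, hP.isHermitian.eigenvalues i) * (euclNorm x * euclNorm y) := by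
  have ha : 0 ≤ euclNorm x := Real.sqrt_nonneg _
  have hb : 0 ≤ euclNorm y := Real.sqrt_nonneg _
  have zero : ∀ z : Fin n → ℝ, euclNorm z = 0 → z = 0 := by
    intro z hz
    have := euclNorm_sq' z
    rw [hz] at this
    exact dotProduct_self_eq_zero.1 (by rw [← this]; norm_num)
  rcases ha.eq_or_lt with h | ha
  · rw [← h, zero x h.symm]; simp
  rcases hb.eq_or_lt with h | hb
  · rw [← h, zero y h.symm]; simp
  have hx := quad_upper P hP.isHermitian x
  have hy := quad_upper P hP.isHermitian y
  rw [← euclNorm_sq'] at hx hy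
  have hsym : y ⬝ᵥ P *ᵥ x = x ⬝ᵥ P *ᵥ y := by
    have ht : Pᵀ = P := by simpa using hP.isHermitian.eq
    rw [Matrix.dotProduct_mulVec, ← Matrix.mulVec_transpose, ht, dotProduct_comm]
  have h0 := hP.posSemidef.dotProduct_mulVec_nonneg (euclNorm y • x - euclNorm x • y)
  simp only [star_trivial, Matrix.mulVec_sub, Matrix.mulVec_smul, sub_dotProduct,
    dotProduct_sub, smul_dotProduct, dotProduct_smul, smul_eq_mul, hsym] at h0
  generalize euclNorm x = a at *
  generalize euclNorm y = b at *
  have hab : 0 < a * b := mul_pos ha hb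
  refine le_of_mul_le_mul_left ?_ hab
  nlinarith [mul_le_mul_of_nonneg_left hx (sq_nonneg b),
    mul_le_mul_of_nonneg_left hy (sq_nonneg a)]

/-- If `P` is symmetric positive definite, `PΓ` is symmetric positive semidefinite,
`α ≥ 0`, and `f` is Lipschitz with constant `L_f` (Euclidean norm), then
`f ∈ Quad(P, αΓ, β)` with `β = α·λ_min(PΓ)/λ_max(P) − L_f·λ_max(P)/λ_min(P)`. -/
theorem lipschitz_mem_quad
    {n : ℕ} [NeZero n]
    (P Γ : Matrix (Fin n) (Fin n) ℝ)
    (hP : P.PosDef) (hPΓ : (P * Γ).PosSemidef)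
    (α : ℝ) (hα : 0 ≤ α)
    (f : (Fin n → ℝ) → (Fin n → ℝ)) (Lf : ℝ)
    (hLip : ∀ u v : Fin n → ℝ, euclNorm (f u - f v) ≤ Lf * euclNorm (u - v)) :
    MemQuad P Γ α
      (α * (⨅ i, hPΓ.isHermitian.eigenvalues i) / (⨆ i, hP.isHermitian.eigenvalues i)
        - Lf * (⨆ i, hP.isHermitian.eigenvalues i) / (⨅ i, hP.isHermitian.eigenvalues i))
      f := by
  intro u v
  have hL := hLip u v
  generalize f u - f v = g at *
  generalize u - v = e at *
  have hm : 0 < ⨅ i, hP.isHermitian.eigenvalues i := by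
    obtain ⟨i, hi⟩ := exists_eq_ciInf_of_finite (f := hP.isHermitian.eigenvalues)
    rw [← hi]; exact hP.eigenvalues_pos i
  have hM : 0 < ⨆ i, hP.isHermitian.eigenvalues i := by
    obtain ⟨i, hi⟩ := exists_eq_ciSup_of_finite (f := hP.isHermitian.eigenvalues)
    rw [← hi]; exact hP.eigenvalues_pos i
  have hk : 0 ≤ ⨅ i, hPΓ.isHermitian.eigenvalues i :=
    Real.iInf_nonneg fun i => hPΓ.eigenvalues_nonneg i
  have h1 := quad_lower P hP.isHermitian e
  have h2 := quad_upper P hP.isHermitian e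
  have h3 := quad_lower (P * Γ) hPΓ.isHermitian e
  have h4 := quad_cross P hP e g
  have ha : 0 ≤ euclNorm e := Real.sqrt_nonneg _
  have hb : 0 ≤ euclNorm g := Real.sqrt_nonneg _
  rw [← euclNorm_sq'] at h1 h2 h3
  rw [Matrix.mulVec_sub, dotProduct_sub, Matrix.mulVec_smul, dotProduct_smul,
    Matrix.mulVec_mulVec, smul_eq_mul]
  generalize (⨅ i, hP.isHermitian.eigenvalues i) = m at *
  generalize (⨆ i, hP.isHermitian.eigenvalues i) = M at *
  generalize (⨅ i, hPΓ.isHermitian.eigenvalues i) = k at *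
  generalize e ⬝ᵥ P *ᵥ e = q at *
  generalize e ⬝ᵥ (P * Γ) *ᵥ e = r at *
  generalize e ⬝ᵥ P *ᵥ g = s at *
  generalize euclNorm e = a at *
  generalize euclNorm g = b at *
  have A1 : α * k / M * q ≤ α * r := by
    have : α * k / M * q ≤ α * k / M * (M * a ^ 2) :=
      mul_le_mul_of_nonneg_left h2 (by positivity)
    have e1 : α * k / M * (M * a ^ 2) = α * (k * a ^ 2) := by field_simp
    rw [e1] at this
    exact this.trans (mul_le_mul_of_nonneg_left h3 hα)
  have A2 : s ≤ Lf * M / m * q := by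
    have s1 : s ≤ M * (a * (Lf * a)) :=
      h4.trans (mul_le_mul_of_nonneg_left (mul_le_mul_of_nonneg_left hL ha) hM.le)
    rcases ha.eq_or_lt with h | ha
    · subst h
      have hq : q = 0 := le_antisymm (by simpa using h2) (by simpa using h1)
      rw [hq]; simpa using s1
    have hLf : 0 ≤ Lf := nonneg_of_mul_nonneg_left (hb.trans hL) ha
    have : Lf * M / m * (m * a ^ 2) ≤ Lf * M / m * q :=
      mul_le_mul_of_nonneg_left h1 (by positivity)
    have e1 : Lf * M / m * (m * a ^ 2) = M * (a * (Lf * a)) := by field_simp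
    linarith
  linarith
end

section
/- Let P ∈ ℝ^{n×n} be symmetric positive definite, let f : ℝⁿ → ℝⁿ be continuously differentiable, and suppose there exists σ ∈ ℝ such that for every x ∈ ℝⁿ the symmetric part of P·Df(x) satisfies {P·Df(x)}ˢ ⪰ σ·P (i.e., {P·Df(x)}ˢ − σP is positive semidefinite), where Df(x) is the Jacobian matrix of f at x. Then for all u, v ∈ ℝⁿ, (u − v)ᵀ P (f(u) − f(v)) ≥ σ·(u − v)ᵀ P (u − v). -/
open Matrix

/-- If `P` is symmetric positive definite, `f : ℝⁿ → ℝⁿ` is continuously differentiable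
with Jacobian `Df`, and the symmetric part of `P·Df(x)` satisfies
`{P·Df(x)}ˢ ⪰ σ·P` for all `x`, then
`(u − v)ᵀ P (f(u) − f(v)) ≥ σ·(u − v)ᵀ P (u − v)` for all `u, v`. -/
theorem quad_lower_of_jacobian_bound
    {n : ℕ}
    (P : Matrix (Fin n) (Fin n) ℝ) (hP : P.PosDef)
    (f : (Fin n → ℝ) → (Fin n → ℝ))
    (Df : (Fin n → ℝ) → Matrix (Fin n) (Fin n) ℝ)
    (hDf : ∀ x : Fin n → ℝ,
      HasFDerivAt f (Df x).mulVecLin.toContinuousLinearMap x)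
    (hDf_cont : Continuous Df)
    (σ : ℝ)
    (hσ : ∀ x : Fin n → ℝ,
      ((1 / 2 : ℝ) • (P * Df x + (P * Df x)ᵀ) - σ • P).PosSemidef) :
    ∀ u v : Fin n → ℝ,
      σ * ((u - v) ⬝ᵥ P *ᵥ (u - v)) ≤ (u - v) ⬝ᵥ P *ᵥ (f u - f v) := by
  intro u v
  set w := u - v with hw
  let L : (Fin n → ℝ) →L[ℝ] ℝ :=
    LinearMap.toContinuousLinearMap
      { toFun := fun y => w ⬝ᵥ P *ᵥ y
        map_add' := fun a b => by rw [Matrix.mulVec_add, dotProduct_add]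
        map_smul' := fun c a => by rw [Matrix.mulVec_smul, dotProduct_smul]; rfl }
  have hL : ∀ y, L y = w ⬝ᵥ P *ᵥ y := fun y => rfl
  have hg : ∀ t : ℝ, HasDerivAt (fun t : ℝ => L (f (v + t • w)))
      (L (Df (v + t • w) *ᵥ w)) t := by
    intro t
    have h1 : HasDerivAt (fun t : ℝ => v + t • w) w t := by
      simpa using ((hasDerivAt_id t).smul_const w).const_add v
    have h2 := (hDf (v + t • w)).comp_hasDerivAt t h1
    exact L.hasFDerivAt.comp_hasDerivAt t h2
  obtain ⟨c, -, hc⟩ := exists_hasDerivAt_eq_slope _ _ (zero_lt_one : (0 : ℝ) < 1)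
    (fun t _ => (hg t).continuousAt.continuousWithinAt) (fun t _ => hg t)
  have hu : v + (1 : ℝ) • w = u := by simp [hw]
  have hv : v + (0 : ℝ) • w = v := by simp
  rw [hu, hv, sub_zero, div_one, ← map_sub, hL, hL] at hc
  rw [← hc]
  have h := (hσ (v + c • w)).dotProduct_mulVec_nonneg w
  have ht : w ⬝ᵥ (P * Df (v + c • w))ᵀ *ᵥ w = w ⬝ᵥ (P * Df (v + c • w)) *ᵥ w := by
    rw [Matrix.mulVec_transpose, dotProduct_comm, ← Matrix.dotProduct_mulVec]
  rw [star_trivial, Matrix.sub_mulVec, Matrix.smul_mulVec, Matrix.smul_mulVec,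
    Matrix.add_mulVec, dotProduct_sub, dotProduct_smul, dotProduct_smul, dotProduct_add, ht,
    smul_eq_mul, smul_eq_mul] at h
  rw [Matrix.mulVec_mulVec]
  linarith
end

section
/- Let P ∈ ℝ^{n×n} be symmetric positive definite, let f : ℝⁿ → ℝⁿ be continuous and suppose there is σ ∈ ℝ with (u − v)ᵀ P (f(u) − f(v)) ≥ σ·(u − v)ᵀ P (u − v) for all u, v ∈ ℝⁿ. Let θ, ϑ ∈ ℝⁿ be constants and let u, v : [0,∞) → ℝⁿ be differentiable with u'(t) = f(u(t)) + θ and v'(t) = f(v(t)) + ϑ, u(0) = u₀, v(0) = v₀. Then for every μ > 0 with μ ≠ 2σ and every t ≥ 0, (u(t) − v(t))ᵀ P (u(t) − v(t)) ≥ exp((2σ − μ)t)·(u₀ − v₀)ᵀ P (u₀ − v₀) − ((θ − ϑ)ᵀ P (θ − ϑ)/μ)·(exp((2σ − μ)t) − 1)/(2σ − μ). -/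
open Matrix

lemma aux_quad_deriv {n : ℕ} (P : Matrix (Fin n) (Fin n) ℝ) (hP : P.PosDef)
    (w : ℝ → Fin n → ℝ) (w' : Fin n → ℝ) (s : Set ℝ) (t : ℝ)
    (hw : HasDerivWithinAt w w' s t) :
    HasDerivWithinAt (fun t => w t ⬝ᵥ P *ᵥ w t) (2 * (w t ⬝ᵥ P *ᵥ w')) s t := by
  have hc := hasDerivWithinAt_pi.1 hw
  have h : HasDerivWithinAt (fun t => ∑ i, w t i * ∑ j, P i j * w t j)
      (∑ i, (w' i * (∑ j, P i j * w t j) + w t i * ∑ j, P i j * w' j)) s t := by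
    refine HasDerivWithinAt.fun_sum fun i _ => (hc i).mul ?_
    exact HasDerivWithinAt.fun_sum fun j _ => (hc j).const_mul _
  have hs : w' ⬝ᵥ P *ᵥ w t = w t ⬝ᵥ P *ᵥ w' := by
    have hT : Pᵀ = P := by simpa [Matrix.IsHermitian] using hP.isHermitian
    rw [Matrix.dotProduct_mulVec, ← Matrix.mulVec_transpose, hT, dotProduct_comm]
  have e : (∑ i, (w' i * (∑ j, P i j * w t j) + w t i * ∑ j, P i j * w' j))
      = w' ⬝ᵥ P *ᵥ w t + w t ⬝ᵥ P *ᵥ w' := by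
    simp only [Finset.sum_add_distrib]; rfl
  rw [e, hs, ← two_mul] at h
  exact h

lemma aux_young {n : ℕ} (P : Matrix (Fin n) (Fin n) ℝ) (hP : P.PosDef)
    (a b : Fin n → ℝ) (μ : ℝ) (hμ : 0 < μ) :
    -μ * (a ⬝ᵥ P *ᵥ a) - (b ⬝ᵥ P *ᵥ b) / μ ≤ 2 * (a ⬝ᵥ P *ᵥ b) := by
  have hs : b ⬝ᵥ P *ᵥ a = a ⬝ᵥ P *ᵥ b := by
    have hT : Pᵀ = P := by simpa [Matrix.IsHermitian] using hP.isHermitian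
    rw [Matrix.dotProduct_mulVec, ← Matrix.mulVec_transpose, hT, dotProduct_comm]
  have h := hP.posSemidef.dotProduct_mulVec_nonneg (μ • a + b)
  simp only [star_trivial, Matrix.mulVec_add, Matrix.mulVec_smul, add_dotProduct,
    dotProduct_add, smul_dotProduct, dotProduct_smul, smul_eq_mul, hs] at h
  have h2 : 0 ≤ (μ * (μ * (a ⬝ᵥ P *ᵥ a)) + μ * (a ⬝ᵥ P *ᵥ b) +
      (μ * (a ⬝ᵥ P *ᵥ b) + b ⬝ᵥ P *ᵥ b)) / μ := div_nonneg (by linarith) hμ.le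
  have h3 : (μ * (μ * (a ⬝ᵥ P *ᵥ a)) + μ * (a ⬝ᵥ P *ᵥ b) +
      (μ * (a ⬝ᵥ P *ᵥ b) + b ⬝ᵥ P *ᵥ b)) / μ
      = μ * (a ⬝ᵥ P *ᵥ a) + 2 * (a ⬝ᵥ P *ᵥ b) + (b ⬝ᵥ P *ᵥ b) / μ := by
    field_simp; ring
  linarith

lemma aux_gronwall (V V' : ℝ → ℝ) (k c : ℝ) (hk : k ≠ 0)
    (hV : ∀ t, 0 ≤ t → HasDerivWithinAt V (V' t) (Set.Ici 0) t)
    (hb : ∀ t, 0 ≤ t → k * V t - c ≤ V' t) (t : ℝ) (ht : 0 ≤ t) :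
    Real.exp (k * t) * V 0 - c * (Real.exp (k * t) - 1) / k ≤ V t := by
  have hd : ∀ t, 0 ≤ t → HasDerivWithinAt (fun t => Real.exp (-k * t) * (V t - c / k))
      (Real.exp (-k * t) * (-k * 1) * (V t - c / k) + Real.exp (-k * t) * V' t)
      (Set.Ici 0) t := by
    intro t ht
    have h1 : HasDerivWithinAt (fun t : ℝ => Real.exp (-k * t))
        (Real.exp (-k * t) * (-k * 1)) (Set.Ici 0) t :=
      (((hasDerivAt_id t).const_mul (-k)).exp).hasDerivWithinAt
    exact h1.mul ((hV t ht).sub_const _)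
  have hm : MonotoneOn (fun t => Real.exp (-k * t) * (V t - c / k)) (Set.Ici 0) := by
    refine monotoneOn_of_hasDerivWithinAt_nonneg (convex_Ici 0)
      (fun x hx => (hd x hx).continuousWithinAt)
      (fun x hx => (hd x (interior_subset hx)).mono interior_subset) ?_
    intro x hx
    have h := hb x (interior_subset hx)
    have e : Real.exp (-k * x) * (-k * 1) * (V x - c / k) + Real.exp (-k * x) * V' x
        = Real.exp (-k * x) * (V' x - (k * V x - c)) := by
      field_simp; ring
    rw [e]
    exact mul_nonneg (Real.exp_pos _).le (by linarith)
  have h := hm (Set.mem_Ici.2 le_rfl) (Set.mem_Ici.2 ht) ht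
  have h2 := mul_le_mul_of_nonneg_left h (Real.exp_pos (k * t)).le
  have e : Real.exp (k * t) * Real.exp (-k * t) = 1 := by
    rw [← Real.exp_add]; simp
  simp only [mul_zero, Real.exp_zero, one_mul, ← mul_assoc, e] at h2
  have e2 : c * (Real.exp (k * t) - 1) / k = Real.exp (k * t) * (c / k) - c / k := by
    field_simp
  rw [e2]
  linarith

/-- Lower-bound generator `ϱ` for the `P`-distance of two trajectories of
`u' = f(u) + θ`, `v' = f(v) + ϑ`, when
`(u − v)ᵀ P (f(u) − f(v)) ≥ σ·(u − v)ᵀ P (u − v)`. -/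
theorem trajectory_P_distance_lower_bound
    {n : ℕ}
    (P : Matrix (Fin n) (Fin n) ℝ) (hP : P.PosDef)
    (f : (Fin n → ℝ) → (Fin n → ℝ)) (hf : Continuous f)
    (σ : ℝ)
    (hσ : ∀ u v : Fin n → ℝ,
      σ * ((u - v) ⬝ᵥ P *ᵥ (u - v)) ≤ (u - v) ⬝ᵥ P *ᵥ (f u - f v))
    (θ ϑ : Fin n → ℝ)
    (u v : ℝ → Fin n → ℝ) (u₀ v₀ : Fin n → ℝ)
    (hu : ∀ t : ℝ, 0 ≤ t → HasDerivWithinAt u (f (u t) + θ) (Set.Ici 0) t)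
    (hv : ∀ t : ℝ, 0 ≤ t → HasDerivWithinAt v (f (v t) + ϑ) (Set.Ici 0) t)
    (hu0 : u 0 = u₀) (hv0 : v 0 = v₀) :
    ∀ μ : ℝ, 0 < μ → μ ≠ 2 * σ → ∀ t : ℝ, 0 ≤ t →
      Real.exp ((2 * σ - μ) * t) * ((u₀ - v₀) ⬝ᵥ P *ᵥ (u₀ - v₀))
        - ((θ - ϑ) ⬝ᵥ P *ᵥ (θ - ϑ) / μ) * (Real.exp ((2 * σ - μ) * t) - 1) / (2 * σ - μ)
      ≤ (u t - v t) ⬝ᵥ P *ᵥ (u t - v t) := by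
  intro μ hμ hne t ht
  subst hu0 hv0
  refine aux_gronwall (fun t => (u t - v t) ⬝ᵥ P *ᵥ (u t - v t))
    (fun t => 2 * ((u t - v t) ⬝ᵥ P *ᵥ ((f (u t) + θ) - (f (v t) + ϑ))))
    (2 * σ - μ) ((θ - ϑ) ⬝ᵥ P *ᵥ (θ - ϑ) / μ) (sub_ne_zero.2 hne.symm) ?_ ?_ t ht
  · intro t ht
    exact aux_quad_deriv P hP (fun t => u t - v t) _ _ t ((hu t ht).sub (hv t ht))
  · intro t ht
    have h1 := hσ (u t) (v t)
    have h2 := aux_young P hP (u t - v t) (θ - ϑ) μ hμ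
    have e : (f (u t) + θ) - (f (v t) + ϑ) = (f (u t) - f (v t)) + (θ - ϑ) := by abel
    simp only [e, Matrix.mulVec_add, dotProduct_add]
    linarith
end

section
/- Let L ∈ ℝ^{m×m} be the Laplacian matrix of a connected undirected graph on m nodes, with eigenvalues 0 = λ₁(L) < λ₂(L) ≤ … ≤ λ_m(L), let P ∈ ℝ^{n×n} be symmetric positive definite with largest eigenvalue λ_max(P), let Γ ∈ ℝ^{n×n} be such that PΓ is symmetric positive semidefinite, let α ∈ ℝ, β > 0 and c > 0 satisfy c·λ₂(L) > α, let f ∈ Quad(P, αΓ, β), and let 0 < β' < β. Suppose x¹,…,x^m : [0,∞) → ℝⁿ are differentiable and satisfy, for each i and all t ≥ 0, (xⁱ)'(t) = f(xⁱ(t)) − c·Σ_{j=1}^m L_{ij}·Γ·xʲ(t) + c·eᵢ(t), where eᵢ : [0,∞) → ℝⁿ. If there exist a > 0 and b > 0 with ‖eᵢ(t)‖ ≤ a·exp(−b·t) for every i and every t ≥ 0, then V satisfies the differential inequality V'(t) ≤ −2(β − β')·V(t) + (a²·c²·m·λ_m(L)·λ_max(P)/(2β'))·exp(−2b·t) for all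 t ≥ 0, and consequently for every γ with 0 < γ < 2·min(b, β − β') there is a constant C ≥ 0 such that V(t) ≤ C·exp(−γ·t) for all t ≥ 0. -/
open Matrix
open scoped Kronecker

/-- The Lyapunov function `V(t) = x(t)ᵀ (L ⊗ P) x(t)` of the stacked state. -/
noncomputable def lyapV {m n : ℕ} (L : Matrix (Fin m) (Fin m) ℝ)
    (P : Matrix (Fin n) (Fin n) ℝ) (x : Fin m → ℝ → Fin n → ℝ) (t : ℝ) : ℝ :=
  (fun p : Fin m × Fin n => x p.1 t p.2) ⬝ᵥ (L ⊗ₖ P) *ᵥ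
    (fun p : Fin m × Fin n => x p.1 t p.2)

lemma aux_psd_quad {k : ℕ} {A : Matrix (Fin k) (Fin k) ℝ} (hA : A.IsHermitian) (q0 q1 q2 : ℝ)
    (h : ∀ i, 0 ≤ q0 + q1 * hA.eigenvalues i + q2 * (hA.eigenvalues i * hA.eigenvalues i)) :
    (q0 • (1 : Matrix (Fin k) (Fin k) ℝ) + q1 • A + q2 • (A * A)).PosSemidef := by
  have hD : (Matrix.diagonal (fun i => q0 + q1 * hA.eigenvalues i
      + q2 * (hA.eigenvalues i * hA.eigenvalues i))).PosSemidef :=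
    Matrix.PosSemidef.diagonal h
  have h1 := hD.mul_mul_conjTranspose_same (hA.eigenvectorUnitary : Matrix (Fin k) (Fin k) ℝ)
  convert h1 using 1
  have hs := hA.spectral_theorem
  set φ := Unitary.conjStarAlgAut ℝ _ hA.eigenvectorUnitary with hφ
  have h2 : ∀ M, (hA.eigenvectorUnitary : Matrix (Fin k) (Fin k) ℝ) * M *
      (hA.eigenvectorUnitary : Matrix (Fin k) (Fin k) ℝ)ᴴ = φ M := by
    intro M; rw [hφ, Unitary.conjStarAlgAut_apply]; rfl
  rw [h2]
  have h3 : (Matrix.diagonal (fun i => q0 + q1 * hA.eigenvalues i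
      + q2 * (hA.eigenvalues i * hA.eigenvalues i))) =
      q0 • (1 : Matrix (Fin k) (Fin k) ℝ)
        + q1 • (Matrix.diagonal (RCLike.ofReal ∘ hA.eigenvalues))
        + q2 • (Matrix.diagonal (RCLike.ofReal ∘ hA.eigenvalues) *
          Matrix.diagonal (RCLike.ofReal ∘ hA.eigenvalues)) := by
    ext i j
    by_cases hij : i = j
    · subst hij; simp
    · simp [hij]
  rw [h3, map_add, map_add, map_smul, map_smul, map_smul, map_mul, map_one, ← hs]

lemma aux_kron {m n : ℕ} (L : Matrix (Fin m) (Fin m) ℝ) (P : Matrix (Fin n) (Fin n) ℝ)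
    (u v : Fin m → Fin n → ℝ) :
    (fun p : Fin m × Fin n => u p.1 p.2) ⬝ᵥ (L ⊗ₖ P) *ᵥ (fun p : Fin m × Fin n => v p.1 p.2)
      = ∑ i, ∑ j, L i j * (u i ⬝ᵥ P *ᵥ v j) := by
  simp only [dotProduct, mulVec, Fintype.sum_prod_type, kroneckerMap_apply, Finset.mul_sum]
  refine Finset.sum_congr rfl fun i _ => ?_
  rw [Finset.sum_comm]
  refine Finset.sum_congr rfl fun j _ => ?_
  refine Finset.sum_congr rfl fun k _ => ?_
  refine Finset.sum_congr rfl fun l _ => ?_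
  ring

lemma aux_lap {m : ℕ} (G : SimpleGraph (Fin m)) [DecidableRel G.Adj] (B : Fin m → Fin m → ℝ) :
    ∑ i, ∑ j, G.lapMatrix ℝ i j * B i j =
      (1 / 2) * ∑ i, ∑ j, G.adjMatrix ℝ i j * (B i i - B i j - B j i + B j j) := by
  have hsym : ∀ i j, G.adjMatrix ℝ i j = G.adjMatrix ℝ j i := fun i j =>
    (G.isSymm_adjMatrix (α := ℝ)).apply j i
  have e1 : ∑ i, ∑ j, G.lapMatrix ℝ i j * B i j
      = ∑ i, ∑ j, G.adjMatrix ℝ i j * B i i - ∑ i, ∑ j, G.adjMatrix ℝ i j * B i j := by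
    rw [← Finset.sum_sub_distrib]
    refine Finset.sum_congr rfl fun i _ => ?_
    simp only [SimpleGraph.lapMatrix, Matrix.sub_apply, sub_mul, Finset.sum_sub_distrib]
    congr 1
    rw [← Finset.sum_mul]
    have : (G.degree i : ℝ) = ∑ j, G.adjMatrix ℝ i j := by
      rw [SimpleGraph.degree_eq_sum_if_adj]; simp [SimpleGraph.adjMatrix_apply]
    rw [← this]
    simp [SimpleGraph.degMatrix, Matrix.diagonal_apply]
  have e2 : ∑ i, ∑ j, G.adjMatrix ℝ i j * B j i = ∑ i, ∑ j, G.adjMatrix ℝ i j * B i j := by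
    rw [Finset.sum_comm]
    simp only [fun i j => hsym j i]
  have e3 : ∑ i, ∑ j, G.adjMatrix ℝ i j * B j j = ∑ i, ∑ j, G.adjMatrix ℝ i j * B i i := by
    rw [Finset.sum_comm]
    refine Finset.sum_congr rfl fun i _ => Finset.sum_congr rfl fun j _ => ?_
    rw [hsym]
  have e4 : ∑ i, ∑ j, G.adjMatrix ℝ i j * (B i i - B i j - B j i + B j j) =
      ∑ i, ∑ j, G.adjMatrix ℝ i j * B i i - ∑ i, ∑ j, G.adjMatrix ℝ i j * B i j
      - ∑ i, ∑ j, G.adjMatrix ℝ i j * B j i + ∑ i, ∑ j, G.adjMatrix ℝ i j * B j j := by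
    simp only [mul_add, mul_sub, Finset.sum_add_distrib, Finset.sum_sub_distrib]
  rw [e1, e4, e2, e3]; ring

lemma aux_lapP {m n : ℕ} (G : SimpleGraph (Fin m)) [DecidableRel G.Adj]
    (P : Matrix (Fin n) (Fin n) ℝ) (u v : Fin m → Fin n → ℝ) :
    (fun p : Fin m × Fin n => u p.1 p.2) ⬝ᵥ (G.lapMatrix ℝ ⊗ₖ P) *ᵥ
        (fun p : Fin m × Fin n => v p.1 p.2)
      = (1 / 2) * ∑ i, ∑ j, G.adjMatrix ℝ i j * ((u i - u j) ⬝ᵥ P *ᵥ (v i - v j)) := by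
  rw [aux_kron, aux_lap]
  congr 1
  refine Finset.sum_congr rfl fun i _ => Finset.sum_congr rfl fun j _ => ?_
  simp only [mulVec_sub, dotProduct_sub, sub_dotProduct]
  ring

/-- the `Quad` estimate summed over the edges -/
lemma aux_quad {m n : ℕ} (G : SimpleGraph (Fin m)) [DecidableRel G.Adj]
    (P Γ : Matrix (Fin n) (Fin n) ℝ) (α β : ℝ) (f : (Fin n → ℝ) → (Fin n → ℝ))
    (hf : MemQuad P Γ α β f) (u : Fin m → Fin n → ℝ) :
    (fun p : Fin m × Fin n => u p.1 p.2) ⬝ᵥ (G.lapMatrix ℝ ⊗ₖ P) *ᵥ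
        (fun p : Fin m × Fin n => f (u p.1) p.2)
      ≤ α * ((fun p : Fin m × Fin n => u p.1 p.2) ⬝ᵥ (G.lapMatrix ℝ ⊗ₖ (P * Γ)) *ᵥ
        (fun p : Fin m × Fin n => u p.1 p.2))
        - β * ((fun p : Fin m × Fin n => u p.1 p.2) ⬝ᵥ (G.lapMatrix ℝ ⊗ₖ P) *ᵥ
        (fun p : Fin m × Fin n => u p.1 p.2)) := by
  rw [aux_lapP G P u (fun i => f (u i)), aux_lapP, aux_lapP]
  have key : ∑ i, ∑ j, G.adjMatrix ℝ i j * ((u i - u j) ⬝ᵥ P *ᵥ (f (u i) - f (u j))) ≤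
      ∑ i, ∑ j, (α * (G.adjMatrix ℝ i j * ((u i - u j) ⬝ᵥ (P * Γ) *ᵥ (u i - u j)))
        - β * (G.adjMatrix ℝ i j * ((u i - u j) ⬝ᵥ P *ᵥ (u i - u j)))) := by
    refine Finset.sum_le_sum fun i _ => Finset.sum_le_sum fun j _ => ?_
    have h := hf (u i) (u j)
    rw [mulVec_sub, dotProduct_sub, mulVec_smul, dotProduct_smul, mulVec_mulVec,
      smul_eq_mul] at h
    have ha : 0 ≤ G.adjMatrix ℝ i j := by
      rw [SimpleGraph.adjMatrix_apply]; split_ifs <;> norm_num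
    have := mul_le_mul_of_nonneg_left (sub_nonneg.2 h) ha
    nlinarith
  simp only [Finset.sum_sub_distrib, ← Finset.mul_sum] at key
  linarith

lemma aux_deriv {ι : Type*} [Fintype ι] (M : Matrix ι ι ℝ) (hM : Mᵀ = M) (X : ℝ → ι → ℝ)
    (X' : ι → ℝ) (t : ℝ) (s : Set ℝ) (h : HasDerivWithinAt X X' s t) :
    HasDerivWithinAt (fun t => X t ⬝ᵥ M *ᵥ X t) (2 * (X t ⬝ᵥ M *ᵥ X')) s t := by
  have hp := hasDerivWithinAt_pi.1 h
  have h1 : HasDerivWithinAt (fun t => X t ⬝ᵥ M *ᵥ X t) (X' ⬝ᵥ M *ᵥ X t + X t ⬝ᵥ M *ᵥ X') s t := by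
    simp only [dotProduct, mulVec, ← Finset.sum_add_distrib]
    refine HasDerivWithinAt.fun_sum fun i _ => ?_
    refine (hp i).fun_mul ?_
    refine HasDerivWithinAt.fun_sum fun j _ => ?_
    exact (hp j).const_mul (M i j)
  convert h1 using 1
  have : X' ⬝ᵥ M *ᵥ X t = X t ⬝ᵥ M *ᵥ X' := by
    rw [dotProduct_mulVec, ← mulVec_transpose, hM, dotProduct_comm]
  rw [this]; ring

lemma aux_nonneg {ι : Type*} [Fintype ι] {M : Matrix ι ι ℝ} (hM : M.PosSemidef) (v : ι → ℝ) :
    0 ≤ v ⬝ᵥ M *ᵥ v := by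
  simpa using hM.dotProduct_mulVec_nonneg v

lemma aux_young_s11 {ι : Type*} [Fintype ι] {M : Matrix ι ι ℝ} (hM : M.PosSemidef) (u v : ι → ℝ)
    (c b : ℝ) (hb : 0 < b) :
    2 * (c * (u ⬝ᵥ M *ᵥ v)) ≤ 2 * b * (u ⬝ᵥ M *ᵥ u) + c ^ 2 / (2 * b) * (v ⬝ᵥ M *ᵥ v) := by
  have hs : v ⬝ᵥ M *ᵥ u = u ⬝ᵥ M *ᵥ v := by
    have : Mᵀ = M := by simpa using hM.isHermitian.eq
    rw [dotProduct_mulVec, ← mulVec_transpose, this, dotProduct_comm]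
  have h := aux_nonneg hM ((2 * b) • u - c • v)
  simp only [mulVec_sub, mulVec_smul, dotProduct_sub, sub_dotProduct, smul_dotProduct,
    dotProduct_smul, smul_eq_mul, hs] at h
  have h2 : 2 * b * (u ⬝ᵥ M *ᵥ u) + c ^ 2 / (2 * b) * (v ⬝ᵥ M *ᵥ v) - 2 * (c * (u ⬝ᵥ M *ᵥ v))
    = (1 / (2 * b)) * (2 * b * (2 * b * (u ⬝ᵥ M *ᵥ u)) - c * (2 * b * (u ⬝ᵥ M *ᵥ v)) -
      (2 * b * (c * (u ⬝ᵥ M *ᵥ v)) - c * (c * (v ⬝ᵥ M *ᵥ v)))) := by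
    field_simp; ring
  have h3 : 0 ≤ 1 / (2 * b) := by positivity
  nlinarith [mul_nonneg h3 h]

lemma aux_upper {m n : ℕ} {L : Matrix (Fin m) (Fin m) ℝ} {P : Matrix (Fin n) (Fin n) ℝ}
    (hL : L.PosSemidef) (l p : ℝ) (hp : 0 ≤ p)
    (hl1 : (l • (1 : Matrix (Fin m) (Fin m) ℝ) - L).PosSemidef)
    (hp1 : (p • (1 : Matrix (Fin n) (Fin n) ℝ) - P).PosSemidef) (v : Fin m × Fin n → ℝ) :
    v ⬝ᵥ (L ⊗ₖ P) *ᵥ v ≤ l * p * (v ⬝ᵥ v) := by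
  have h1 := aux_nonneg (hL.kronecker hp1) v
  have h2 := aux_nonneg (hl1.kronecker (Matrix.PosSemidef.one.smul hp :
    (p • (1 : Matrix (Fin n) (Fin n) ℝ)).PosSemidef)) v
  have e : L ⊗ₖ (p • (1 : Matrix (Fin n) (Fin n) ℝ) - P)
    + (l • (1 : Matrix (Fin m) (Fin m) ℝ) - L) ⊗ₖ (p • (1 : Matrix (Fin n) (Fin n) ℝ))
    = (l * p) • (1 : Matrix (Fin m × Fin n) (Fin m × Fin n) ℝ) - L ⊗ₖ P := by
    ext ⟨i, j⟩ ⟨k, l⟩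
    simp only [Matrix.add_apply, kroneckerMap_apply, Matrix.sub_apply, Matrix.smul_apply,
      Matrix.one_apply, Prod.mk.injEq, smul_eq_mul]
    by_cases h : i = k <;> by_cases h' : j = l <;> simp [h, h'] <;> ring
  have h3 : 0 ≤ v ⬝ᵥ ((l * p) • (1 : Matrix (Fin m × Fin n) (Fin m × Fin n) ℝ) - L ⊗ₖ P) *ᵥ v := by
    rw [← e, add_mulVec, dotProduct_add]; exact add_nonneg h1 h2
  rw [sub_mulVec, smul_mulVec, one_mulVec, dotProduct_sub, dotProduct_smul, smul_eq_mul] at h3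
  linarith

lemma aux_gronwall_s11 (V V' : ℝ → ℝ) (hV0 : ∀ t, 0 ≤ V t)
    (hV : ∀ t, 0 ≤ t → HasDerivWithinAt V (V' t) (Set.Ici 0) t) (κ K b γ : ℝ) (hK : 0 ≤ K)
    (hb : γ < 2 * b) (hκ : γ < 2 * κ)
    (hle : ∀ t, 0 ≤ t → V' t ≤ -2 * κ * V t + K * Real.exp (-2 * b * t)) :
    ∃ C : ℝ, 0 ≤ C ∧ ∀ t : ℝ, 0 ≤ t → V t ≤ C * Real.exp (-γ * t) := by
  have hpos : 0 < 2 * b - γ := by linarith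
  set W : ℝ → ℝ := fun t => Real.exp (γ * t) * V t
    + K / (2 * b - γ) * Real.exp (-(2 * b - γ) * t) with hW
  have hexp : ∀ (q t : ℝ) (s : Set ℝ),
      HasDerivWithinAt (fun t => Real.exp (q * t)) (q * Real.exp (q * t)) s t := by
    intro q t s
    have := (((hasDerivAt_id t).const_mul q).exp).hasDerivWithinAt (s := s)
    simpa [mul_comm] using this
  have hWd : ∀ t, 0 ≤ t → HasDerivWithinAt W (γ * Real.exp (γ * t) * V t + Real.exp (γ * t) * V' t
      + K / (2 * b - γ) * (-(2 * b - γ) * Real.exp (-(2 * b - γ) * t))) (Set.Ici 0) t := by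
    intro t ht
    exact ((hexp γ t _).fun_mul (hV t ht)).fun_add ((hexp (-(2 * b - γ)) t _).const_mul _)
  have hanti : AntitoneOn W (Set.Ici 0) := by
    have hat : ∀ t ∈ interior (Set.Ici (0 : ℝ)), HasDerivAt W (γ * Real.exp (γ * t) * V t
      + Real.exp (γ * t) * V' t
      + K / (2 * b - γ) * (-(2 * b - γ) * Real.exp (-(2 * b - γ) * t))) t := by
      intro t ht
      rw [interior_Ici] at ht
      exact (hWd t (le_of_lt ht)).hasDerivAt (Ici_mem_nhds ht)
    refine antitoneOn_of_deriv_nonpos (convex_Ici 0)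
      (fun t ht => (hWd t ht).continuousWithinAt)
      (fun t ht => (hat t ht).differentiableAt.differentiableWithinAt) ?_
    intro t ht
    rw [(hat t ht).deriv]
    rw [interior_Ici] at ht
    have h0 : (0 : ℝ) ≤ t := le_of_lt ht
    have h1 := hle t h0
    have h2 : K / (2 * b - γ) * (-(2 * b - γ) * Real.exp (-(2 * b - γ) * t))
        = - (Real.exp (γ * t) * (K * Real.exp (-2 * b * t))) := by
      have : Real.exp (-(2 * b - γ) * t) = Real.exp (γ * t) * Real.exp (-2 * b * t) := by
        rw [← Real.exp_add]; congr 1; ring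
      rw [this]; field_simp
    rw [h2]
    have h3 := mul_le_mul_of_nonneg_left h1 (Real.exp_pos (γ * t)).le
    have h4 : 0 ≤ (2 * κ - γ) * (Real.exp (γ * t) * V t) :=
      mul_nonneg (by linarith) (mul_nonneg (Real.exp_pos _).le (hV0 t))
    nlinarith
  refine ⟨W 0, ?_, ?_⟩
  · have := hV0 0
    simp only [hW]
    positivity
  · intro t ht
    have h1 := hanti (Set.mem_Ici.2 le_rfl) (Set.mem_Ici.2 ht) ht
    have h2 : Real.exp (γ * t) * V t ≤ W 0 := by
      refine le_trans ?_ h1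
      simp only [hW]
      have : 0 ≤ K / (2 * b - γ) * Real.exp (-(2 * b - γ) * t) := by positivity
      linarith
    have h3 := mul_le_mul_of_nonneg_right h2 (Real.exp_pos (-γ * t)).le
    have h4 : Real.exp (γ * t) * Real.exp (-γ * t) = 1 := by
      rw [← Real.exp_add]; simp
    calc V t = (Real.exp (γ * t) * Real.exp (-γ * t)) * V t := by rw [h4, one_mul]
      _ = Real.exp (γ * t) * V t * Real.exp (-γ * t) := by ring
      _ ≤ _ := h3

/-- Continuous-monitoring convergence (Theorem 1, updating rule (2)):
if `‖eᵢ(t)‖ ≤ a·e^{−bt}` for all `i, t`, then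
`V'(t) ≤ −2(β − β')V(t) + (a²c²m·λ_m(L)·λ_max(P)/(2β'))·e^{−2bt}`, and for every
`0 < γ < 2·min(b, β − β')` there is `C ≥ 0` with `V(t) ≤ C·e^{−γt}`. -/
theorem event_trigger_rule2_sync
    {m n : ℕ} [NeZero m] [NeZero n]
    (G : SimpleGraph (Fin m)) [DecidableRel G.Adj] (hG : G.Connected)
    (P Γ : Matrix (Fin n) (Fin n) ℝ)
    (hP : P.PosDef) (hPΓ : (P * Γ).PosSemidef)
    (lam2 lamm lamP : ℝ)
    (hlam2 : IsLeast {r : ℝ | r ≠ 0 ∧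
      ∃ i, (SimpleGraph.posSemidef_lapMatrix ℝ G).isHermitian.eigenvalues i = r} lam2)
    (hlamm : IsGreatest {r : ℝ |
      ∃ i, (SimpleGraph.posSemidef_lapMatrix ℝ G).isHermitian.eigenvalues i = r} lamm)
    (hlamP : IsGreatest {r : ℝ | ∃ i, hP.isHermitian.eigenvalues i = r} lamP)
    (α β c : ℝ) (hβ : 0 < β) (hc : 0 < c) (hcα : α < c * lam2)
    (f : (Fin n → ℝ) → (Fin n → ℝ)) (hf : MemQuad P Γ α β f)
    (β' : ℝ) (hβ'0 : 0 < β') (hβ'β : β' < β)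
    (x e : Fin m → ℝ → Fin n → ℝ)
    (hode : ∀ (i : Fin m) (t : ℝ), 0 ≤ t →
      HasDerivWithinAt (x i)
        (f (x i t) - c • (∑ j, G.lapMatrix ℝ i j • (Γ *ᵥ x j t)) + c • e i t)
        (Set.Ici 0) t)
    (a b : ℝ) (ha : 0 < a) (hb : 0 < b)
    (htrig : ∀ (i : Fin m) (t : ℝ), 0 ≤ t → euclNorm (e i t) ≤ a * Real.exp (-b * t)) :
    (∀ t : ℝ, 0 ≤ t → ∀ d : ℝ,
        HasDerivWithinAt (lyapV (G.lapMatrix ℝ) P x) d (Set.Ici 0) t →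
        d ≤ -2 * (β - β') * lyapV (G.lapMatrix ℝ) P x t
            + a ^ 2 * c ^ 2 * m * lamm * lamP / (2 * β') * Real.exp (-2 * b * t)) ∧
      ∀ γ : ℝ, 0 < γ → γ < 2 * min b (β - β') →
        ∃ C : ℝ, 0 ≤ C ∧ ∀ t : ℝ, 0 ≤ t →
          lyapV (G.lapMatrix ℝ) P x t ≤ C * Real.exp (-γ * t) := by
  set L := G.lapMatrix ℝ with hLdef
  have hLpsd : L.PosSemidef := SimpleGraph.posSemidef_lapMatrix ℝ G
  set hH := (SimpleGraph.posSemidef_lapMatrix ℝ G).isHermitian with hHdef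
  have hMpsd : (L ⊗ₖ P).PosSemidef := hLpsd.kronecker hP.posSemidef
  have hMT : (L ⊗ₖ P)ᵀ = L ⊗ₖ P := by simpa using hMpsd.isHermitian.eq
  have hlamm0 : 0 ≤ lamm := by
    obtain ⟨i, hi⟩ := hlamm.1
    rw [← hi]; exact hLpsd.eigenvalues_nonneg i
  have hlamP0 : 0 ≤ lamP := by
    obtain ⟨i, hi⟩ := hlamP.1
    rw [← hi]; exact hP.posSemidef.eigenvalues_nonneg i
  have hl1 : (lamm • (1 : Matrix (Fin m) (Fin m) ℝ) - L).PosSemidef := by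
    have := aux_psd_quad hH lamm (-1) 0 (fun i => by
      have := hlamm.2 ⟨i, rfl⟩
      linarith)
    simpa [sub_eq_add_neg] using this
  have hp1 : (lamP • (1 : Matrix (Fin n) (Fin n) ℝ) - P).PosSemidef := by
    have := aux_psd_quad hP.isHermitian lamP (-1) 0 (fun i => by
      have := hlamP.2 ⟨i, rfl⟩
      linarith)
    simpa [sub_eq_add_neg] using this
  have hcL : ((-α) • L + c • (L * L)).PosSemidef := by
    have := aux_psd_quad hH 0 (-α) c (fun i => by
      have h0 : 0 ≤ hH.eigenvalues i := hLpsd.eigenvalues_nonneg i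
      by_cases hz : hH.eigenvalues i = 0
      · simp [hz]
      · have h1 : lam2 ≤ hH.eigenvalues i := hlam2.2 ⟨hz, i, rfl⟩
        have h2 : 0 ≤ c * hH.eigenvalues i - α := by
          have := mul_le_mul_of_nonneg_left h1 hc.le
          linarith
        nlinarith [mul_nonneg h0 h2])
    simpa using this
  set X : ℝ → Fin m × Fin n → ℝ := fun t p => x p.1 t p.2 with hX
  set F : ℝ → Fin m × Fin n → ℝ := fun t p => f (x p.1 t) p.2 with hF
  set E : ℝ → Fin m × Fin n → ℝ := fun t p => e p.1 t p.2 with hE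
  have hXd : ∀ t, 0 ≤ t →
      HasDerivWithinAt X (F t - c • ((L ⊗ₖ Γ) *ᵥ X t) + c • E t) (Set.Ici 0) t := by
    intro t ht
    refine hasDerivWithinAt_pi.2 ?_
    rintro ⟨i, k⟩
    have h := hasDerivWithinAt_pi.1 (hode i t ht) k
    convert h using 1
    simp only [hX, hF, hE, Pi.add_apply, Pi.sub_apply, Pi.smul_apply, smul_eq_mul,
      Finset.sum_apply, mulVec, dotProduct, Fintype.sum_prod_type, kroneckerMap_apply,
      Finset.mul_sum, mul_assoc]
  set V' : ℝ → ℝ := fun t =>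
    2 * (X t ⬝ᵥ (L ⊗ₖ P) *ᵥ (F t - c • ((L ⊗ₖ Γ) *ᵥ X t) + c • E t)) with hV'
  have hVd : ∀ t, 0 ≤ t → HasDerivWithinAt (lyapV L P x) (V' t) (Set.Ici 0) t := by
    intro t ht
    exact aux_deriv (L ⊗ₖ P) hMT X _ t _ (hXd t ht)
  have hmain : ∀ t, 0 ≤ t → V' t ≤ -2 * (β - β') * lyapV L P x t
      + a ^ 2 * c ^ 2 * m * lamm * lamP / (2 * β') * Real.exp (-2 * b * t) := by
    intro t ht
    have hVt : lyapV L P x t = X t ⬝ᵥ (L ⊗ₖ P) *ᵥ X t := rfl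
    have h1 : X t ⬝ᵥ (L ⊗ₖ P) *ᵥ F t ≤ α * (X t ⬝ᵥ (L ⊗ₖ (P * Γ)) *ᵥ X t)
        - β * (X t ⬝ᵥ (L ⊗ₖ P) *ᵥ X t) := aux_quad G P Γ α β f hf (fun i => x i t)
    have h2 := aux_nonneg (hcL.kronecker hPΓ) (X t)
    have e2 : ((-α) • L + c • (L * L)) ⊗ₖ (P * Γ)
        = (-α) • (L ⊗ₖ (P * Γ)) + c • ((L ⊗ₖ P) * (L ⊗ₖ Γ)) := by
      rw [add_kronecker, smul_kronecker, smul_kronecker, ← mul_kronecker_mul]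
    rw [e2, add_mulVec, smul_mulVec, smul_mulVec, dotProduct_add, dotProduct_smul,
      dotProduct_smul, smul_eq_mul, smul_eq_mul, ← mulVec_mulVec] at h2
    have h3 := aux_young_s11 hMpsd (X t) (E t) c β' hβ'0
    have h4 := aux_upper hLpsd lamm lamP hlamP0 hl1 hp1 (E t)
    have h5 : E t ⬝ᵥ E t ≤ m * (a ^ 2 * Real.exp (-2 * b * t)) := by
      have hi : ∀ i, ∑ k, e i t k ^ 2 ≤ a ^ 2 * Real.exp (-2 * b * t) := by
        intro i
        have h := htrig i t ht
        rw [euclNorm, Real.sqrt_le_left (by positivity)] at h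
        convert h using 1
        rw [mul_pow, ← Real.exp_nat_mul]; congr 2; push_cast; ring
      calc E t ⬝ᵥ E t = ∑ i, ∑ k, e i t k ^ 2 := by
            simp only [hE, dotProduct, Fintype.sum_prod_type, pow_two]
        _ ≤ ∑ i : Fin m, a ^ 2 * Real.exp (-2 * b * t) := Finset.sum_le_sum fun i _ => hi i
        _ = _ := by simp
    have h6 : c ^ 2 / (2 * β') * (E t ⬝ᵥ (L ⊗ₖ P) *ᵥ E t) ≤
        a ^ 2 * c ^ 2 * m * lamm * lamP / (2 * β') * Real.exp (-2 * b * t) := by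
      have h7 : E t ⬝ᵥ (L ⊗ₖ P) *ᵥ E t ≤
          lamm * lamP * (m * (a ^ 2 * Real.exp (-2 * b * t))) :=
        h4.trans (mul_le_mul_of_nonneg_left h5 (mul_nonneg hlamm0 hlamP0))
      have h8 : 0 ≤ c ^ 2 / (2 * β') := by positivity
      refine (mul_le_mul_of_nonneg_left h7 h8).trans (le_of_eq ?_)
      ring
    have e3 : V' t = 2 * (X t ⬝ᵥ (L ⊗ₖ P) *ᵥ F t)
        - 2 * (c * (X t ⬝ᵥ (L ⊗ₖ P) *ᵥ ((L ⊗ₖ Γ) *ᵥ X t)))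
        + 2 * (c * (X t ⬝ᵥ (L ⊗ₖ P) *ᵥ E t)) := by
      simp only [hV', mulVec_add, mulVec_sub, mulVec_smul, dotProduct_add, dotProduct_sub,
        dotProduct_smul, smul_eq_mul]
      ring
    rw [e3, hVt]
    linarith
  refine ⟨?_, ?_⟩
  · intro t ht d hd
    have : d = V' t := UniqueDiffWithinAt.eq_deriv (Set.Ici 0)
      (uniqueDiffOn_Ici 0 t ht) hd (hVd t ht)
    rw [this]; exact hmain t ht
  · intro γ _ hγ
    have hb1 := min_le_left b (β - β')
    have hb2 := min_le_right b (β - β')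
    exact aux_gronwall_s11 (lyapV L P x) V' (fun t => aux_nonneg hMpsd (X t)) hVd (β - β') _ b γ
      (by positivity) (by linarith) (by linarith) hmain
end
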